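/- Let H be the graph obtained from two 7-suns S and S′ by identifying a bowtie of S with a bowtie of S′ via a NOT gadget, and suppose H is a triangular line graph with preimage G. Then the subgraphs T⁻¹(S) and T⁻¹(S′) of G (induced by the edges of G corresponding to the vertices of S and of S′, respectively) are not isomorphic: one is a 7-wheel and the other is a squared 7-cycle. -/

import Mathlib

open SimpleGraph

/-- The triangular line graph `T(G)` of a graph `G`: vertices are the edges of `G`,
with two edges adjacent iff they share an endpoint and lie in a common triangle. -/
def TriLine {V : Type*} (G : SimpleGraph V) : SimpleGraph G.edgeSet where
  Adj e₁ e₂ := ∃ u v w : V, G.Adj u v ∧ G.Adj v w ∧ G.Adj u w ∧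
      (e₁ : Sym2 V) = s(u, v) ∧ (e₂ : Sym2 V) = s(v, w)
  symm := by
    constructor
    rintro e₁ e₂ ⟨u, v, w, huv, hvw, huw, h₁, h₂⟩
    exact ⟨w, v, u, hvw.symm, huv.symm, huw.symm, by rw [h₂]; exact Sym2.eq_swap,
      by rw [h₁]; exact Sym2.eq_swap⟩
  loopless := by
    constructor
    rintro e ⟨u, v, w, huv, hvw, huw, h₁, h₂⟩
    rw [h₁, Sym2.eq_iff] at h₂
    rcases h₂ with ⟨h, _⟩ | ⟨h, _⟩
    · exact huv.ne h
    · exact huw.ne h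

/-- `H` is a triangular line graph: it is isomorphic to `T(G)` for some finite graph `G`. -/
def IsTriLineGraph {W : Type*} (H : SimpleGraph W) : Prop :=
  ∃ (V : Type) (_ : Fintype V) (G : SimpleGraph V), Nonempty (TriLine G ≃g H)

/-- Given a preimage `G` of `H` (via the isomorphism `f : T(G) ≃g H`) and a set `S` of
vertices of `H`, this is the subgraph of `G` consisting of the edges of `G` corresponding
to the vertices in `S` (together with their endpoints); i.e. `T⁻¹(S)`. -/
def edgePre {V W : Type*} (G : SimpleGraph V) {H : SimpleGraph W}
    (f : TriLine G ≃g H) (S : Set W) : G.Subgraph where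
  verts := {v | ∃ (u : V) (e : G.edgeSet), (e : Sym2 V) = s(v, u) ∧ (f e : W) ∈ S}
  Adj a b := G.Adj a b ∧ ∃ e : G.edgeSet, (e : Sym2 V) = s(a, b) ∧ (f e : W) ∈ S
  adj_sub h := h.1
  edge_vert := by
    rintro a b ⟨h, e, he, hS⟩
    exact ⟨b, e, he, hS⟩
  symm := by
    constructor
    rintro a b ⟨h, e, he, hS⟩
    exact ⟨h.symm, e, he.trans Sym2.eq_swap, hS⟩

/-- `A` occurs as a (not necessarily induced) subgraph of `B`. -/
def HasSubgraphIso {α β : Type*} (A : SimpleGraph α) (B : SimpleGraph β) : Prop :=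
  ∃ f : α → β, Function.Injective f ∧ ∀ a b, A.Adj a b → B.Adj (f a) (f b)

/-- Glue a graph along an identification relation `R`: the quotient graph on
the quotient of the vertex set by the equivalence generated by `R`. -/
def Glue {ι : Type*} (G : SimpleGraph ι) (R : ι → ι → Prop) :
    SimpleGraph (Quotient (Relation.EqvGen.setoid R)) :=
  SimpleGraph.fromRel (fun x y => ∃ a b : ι, G.Adj a b ∧ x = Quotient.mk _ a ∧ y = Quotient.mk _ b)

/-- The `k`-wheel: a `k`-cycle plus a dominating center vertex (`none`). -/
def wheelGraph (k : ℕ) : SimpleGraph (Option (ZMod k)) :=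
  SimpleGraph.fromRel (fun a b =>
    (∃ i : ZMod k, a = some i ∧ b = some (i + 1)) ∨ (a = none ∧ b ≠ none))

/-- The squared `k`-cycle: a `k`-cycle plus edges between vertices at distance two. -/
def squaredCycleGraph (k : ℕ) : SimpleGraph (ZMod k) :=
  SimpleGraph.fromRel (fun i j => j = i + 1 ∨ j = i + 2)

/-- The `k`-sun: a `k`-cycle (the `Sum.inl` vertices), with a new vertex (`Sum.inr i`)
for each cycle edge `{i, i+1}`, adjacent to both its endpoints. -/
def sunGraph (k : ℕ) : SimpleGraph (ZMod k ⊕ ZMod k) :=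
  SimpleGraph.fromRel (fun a b => ∃ i : ZMod k,
    (a = Sum.inl i ∧ b = Sum.inl (i + 1)) ∨
    (a = Sum.inr i ∧ b = Sum.inl i) ∨
    (a = Sum.inr i ∧ b = Sum.inl (i + 1)))

/-- Vertex type of a 7-sun: `Sum.inl i` are the cycle vertices `cᵢ`, and `Sum.inr i` is
the degree-two vertex `pᵢ` attached to the cycle edge `{cᵢ, cᵢ₊₁}`. -/
abbrev SunV : Type := ZMod 7 ⊕ ZMod 7

/-- Two disjoint copies of the 7-sun: copy `false` is `S` and copy `true` is `S'`. -/
def twoSuns : SimpleGraph (Bool × SunV) :=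
  SimpleGraph.fromRel (fun a b => a.1 = b.1 ∧ (sunGraph 7).Adj a.2 b.2)

/-- The NOT-gadget identification between the bowtie `{c₀,c₁,c₂,p₀,p₁}` (center `c₁`) of
`S` and the bowtie of `S'`: the centers are identified; in one pair of corresponding
triangles the two on-cycle vertices (and the two off-cycle vertices) are identified, and
in the other pair the on-cycle vertex of each sun is identified with the off-cycle vertex
of the other. -/
def notRel : (Bool × SunV) → (Bool × SunV) → Prop := fun x y =>
  (x = (false, Sum.inl 1) ∧ y = (true, Sum.inl 1)) ∨
  (x = (false, Sum.inl 0) ∧ y = (true, Sum.inl 0)) ∨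
  (x = (false, Sum.inr 0) ∧ y = (true, Sum.inr 0)) ∨
  (x = (false, Sum.inl 2) ∧ y = (true, Sum.inr 1)) ∨
  (x = (false, Sum.inr 1) ∧ y = (true, Sum.inl 2))

/-- Two 7-suns glued at a bowtie via the NOT gadget. -/
def notGadget : SimpleGraph (Quotient (Relation.EqvGen.setoid notRel)) :=
  Glue twoSuns notRel

/-- The vertices of the glued graph coming from the copy `c` of the 7-sun. -/
def notSunVerts (c : Bool) : Set (Quotient (Relation.EqvGen.setoid notRel)) :=
  Set.range (fun v : SunV => Quotient.mk _ (c, v))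

/-!
Write `cᵢ` and `pᵢ` for the vertices `Sum.inl i` and `Sum.inr i` of a sun. In the NOT gadget every
edge lies in a unique triangle, so each triangle `cᵢ, cᵢ₊₁, pᵢ` of a sun comes from a triangle of
`G`, and these form a cyclic strip in which the `i`-th triangle has a pivot, the common endpoint of
the edges `cᵢ` and `cᵢ₊₁`. If the pivot never changes, the strip is a wheel; if it changes at every
step, the strip is a squared cycle. If it changes at some steps but not at all, the successive
pivots form a closed zigzag, and a pivot of one triangle only can be skipped along the edge opposite
to it. As there are only seven triangles, this produces a loop, a doubled edge, or a triangle of `G`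
two of whose edges are not adjacent in the sun, which is impossible.

The edges `c₀, c₁, c₂` concur in a wheel but not in a squared cycle, and the edges `c₀, c₁, p₁`
concur in a squared cycle but not in a wheel. The NOT gadget identifies the first triple of `S` with
the second triple of `S'`, so the two suns cannot be of the same kind.
-/

section Sun

variable {k : ℕ}

instance [NeZero k] : DecidableRel (sunGraph k).Adj :=
  fun _ _ => decidable_of_iff _ (fromRel_adj _ _ _).symm

lemma sunGraph_adj_inl_succ [Nontrivial (ZMod k)] (i : ZMod k) :
    (sunGraph k).Adj (Sum.inl i) (Sum.inl (i + 1)) := by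
  simp [sunGraph]

lemma sunGraph_adj_inl_inr (i : ZMod k) : (sunGraph k).Adj (Sum.inl i) (Sum.inr i) := by
  simp [sunGraph]

lemma sunGraph_adj_inl_succ_inr (i : ZMod k) :
    (sunGraph k).Adj (Sum.inl (i + 1)) (Sum.inr i) := by
  simp [sunGraph]

/-- The edges of the `k`-wheel, indexed by the vertices of the `k`-sun. -/
def wheelEdge (k : ℕ) : ZMod k ⊕ ZMod k → Sym2 (Option (ZMod k))
  | Sum.inl i => s(none, some i)
  | Sum.inr i => s(some i, some (i + 1))

/-- The edges of the squared `k`-cycle, indexed by the vertices of the `k`-sun. -/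
def squaredCycleEdge (k : ℕ) : ZMod k ⊕ ZMod k → Sym2 (ZMod k)
  | Sum.inl i => s(i, i + 1)
  | Sum.inr i => s(i, i + 2)

lemma fromEdgeSet_range_wheelEdge (k : ℕ) :
    fromEdgeSet (Set.range (wheelEdge k)) = wheelGraph k := by
  ext a b
  simp only [wheelGraph, wheelEdge, fromEdgeSet_adj, fromRel_adj, Set.mem_range, Sum.exists,
    Sym2.eq_iff]
  cases a <;> cases b <;> grind

lemma fromEdgeSet_range_squaredCycleEdge (k : ℕ) :
    fromEdgeSet (Set.range (squaredCycleEdge k)) = squaredCycleGraph k := by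
  ext a b
  simp only [squaredCycleGraph, squaredCycleEdge, fromEdgeSet_adj, fromRel_adj, Set.mem_range,
    Sum.exists, Sym2.eq_iff]
  grind

end Sun

section TriLine

variable {V : Type*} {G : SimpleGraph V}

lemma triLine_adj_of_triangle {e₁ e₂ : G.edgeSet} {a b c : V} (h₁ : (e₁ : Sym2 V) = s(a, b))
    (h₂ : (e₂ : Sym2 V) = s(b, c)) (hac : G.Adj a c) : (TriLine G).Adj e₁ e₂ := by
  have hab : G.Adj a b := by rw [← mem_edgeSet, ← h₁]; exact e₁.2
  have hbc : G.Adj b c := by rw [← mem_edgeSet, ← h₂]; exact e₂.2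
  exact ⟨a, b, c, hab, hbc, hac, h₁, h₂⟩

lemma exists_triangle_of_commonNeighbors_subsingleton {e₁ e₂ e₃ : G.edgeSet}
    (h : ((TriLine G).commonNeighbors e₁ e₂).Subsingleton) (h₁₂ : (TriLine G).Adj e₁ e₂)
    (h₁₃ : (TriLine G).Adj e₁ e₃) (h₂₃ : (TriLine G).Adj e₂ e₃) :
    ∃ a b c, (e₁ : Sym2 V) = s(a, b) ∧ (e₂ : Sym2 V) = s(b, c) ∧ (e₃ : Sym2 V) = s(a, c) := by
  obtain ⟨a, b, c, hab, hbc, hac, h₁, h₂⟩ := h₁₂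
  refine ⟨a, b, c, h₁, h₂, ?_⟩
  have hmem : (⟨s(a, c), hac⟩ : G.edgeSet) ∈ (TriLine G).commonNeighbors e₁ e₂ :=
    ⟨triLine_adj_of_triangle (h₁.trans Sym2.eq_swap) rfl hbc,
      triLine_adj_of_triangle h₂ Sym2.eq_swap hab.symm⟩
  exact congrArg Subtype.val (h ⟨h₁₃, h₂₃⟩ hmem)

end TriLine

/-- A cyclic sequence of triangles along a labelling `E` of the `k`-sun by edges: the `i`-th
triangle `tail i, pivot i, head i` shares the edge `E (Sum.inl (i + 1))` with the next one. -/
structure SunStrip {V : Type*} {k : ℕ} (E : ZMod k ⊕ ZMod k → Sym2 V) where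
  tail : ZMod k → V
  pivot : ZMod k → V
  head : ZMod k → V
  inl_eq (i : ZMod k) : E (Sum.inl i) = s(tail i, pivot i)
  inl_succ_eq (i : ZMod k) : E (Sum.inl (i + 1)) = s(pivot i, head i)
  inr_eq (i : ZMod k) : E (Sum.inr i) = s(tail i, head i)

lemma nonempty_sunStrip {V : Type*} {G : SimpleGraph V} {k : ℕ} [Nontrivial (ZMod k)]
    (hT : ∀ e₁ e₂, (TriLine G).Adj e₁ e₂ → ((TriLine G).commonNeighbors e₁ e₂).Subsingleton)
    (φ : sunGraph k ↪g TriLine G) : Nonempty (SunStrip fun z => (φ z : Sym2 V)) := by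
  have htri (i : ZMod k) := exists_triangle_of_commonNeighbors_subsingleton
    (hT _ _ (φ.map_adj_iff.2 (sunGraph_adj_inl_succ i)))
    (φ.map_adj_iff.2 (sunGraph_adj_inl_succ i)) (φ.map_adj_iff.2 (sunGraph_adj_inl_inr i))
    (φ.map_adj_iff.2 (sunGraph_adj_inl_succ_inr i))
  choose tail pivot head h₁ h₂ h₃ using htri
  exact ⟨⟨tail, pivot, head, h₁, h₂, h₃⟩⟩

section Turns

variable {k : ℕ}

/-- For a strip that turns exactly at the positions marked by `t`, the position just after the
first turn at or after `i`. It is junk when `t` marks no position. -/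
def nextPivot (t : ZMod k → Bool) (i : ZMod k) : ZMod k :=
  i + ((List.range k).findIdx fun n : ℕ => t (i + n)) + 1

/-- The edges of a strip with turns `t` that leave the pivot at position `i` towards one of the
next two pivots, as pairs of the position reached and the sun vertex labelled by the edge. -/
def chords (t : ZMod k → Bool) (i : ZMod k) : List (ZMod k × (ZMod k ⊕ ZMod k)) :=
  let j := nextPivot t i
  (j, Sum.inl j) :: if t j then [(j + 1, Sum.inr j)] else []

lemma exists_nextPivot_eq [NeZero k] {t : ZMod k → Bool} (ht : ∃ j, t j = true) (i : ZMod k) :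
    ∃ n : ℕ, nextPivot t i = i + n + 1 ∧ t (i + n) = true ∧ ∀ m < n, t (i + m) = false := by
  obtain ⟨j, hj⟩ := ht
  have hex : ∃ n ∈ List.range k, t (i + n) = true :=
    ⟨(j - i).val, List.mem_range.2 (ZMod.val_lt _), by simpa using hj⟩
  refine ⟨_, rfl, ?_, fun m hm => ?_⟩
  · simpa using List.findIdx_getElem (w := List.findIdx_lt_length_of_exists hex)
  · simpa using List.not_of_lt_findIdx hm

lemma exists_short_closed_walk (t : ZMod 7 → Bool) (h₀ : ∃ i, t i = true)
    (h₁ : ∃ i, t i = false) :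
    ∃ i, nextPivot t (nextPivot t i) = i ∨
      ∃ p ∈ chords t i, ∃ q ∈ chords t p.1, ∃ r ∈ chords t q.1,
        r.1 = i ∧ ¬ (sunGraph 7).Adj p.2 q.2 := by
  revert t
  decide +kernel

end Turns

namespace SunStrip

variable {V : Type*} {k : ℕ} {E : ZMod k ⊕ ZMod k → Sym2 V} (S : SunStrip E)

open Classical in
/-- Marks the positions at which consecutive triangles have different pivots. -/
noncomputable def turns (i : ZMod k) : Bool := S.pivot (i + 1) ≠ S.pivot i

variable {S} {i : ZMod k}

lemma pivot_succ (h : S.turns i = false) : S.pivot (i + 1) = S.pivot i := by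
  simpa [turns] using h

lemma tail_succ (h : S.turns i = false) : S.tail (i + 1) = S.head i := by
  have hE := (S.inl_eq (i + 1)).symm.trans (S.inl_succ_eq i)
  rw [pivot_succ h, Sym2.eq_swap] at hE
  exact Sym2.congr_right.1 hE

lemma tail_succ_of_turns (h : S.turns i = true) : S.tail (i + 1) = S.pivot i := by
  have hne : S.pivot (i + 1) ≠ S.pivot i := by simpa [turns] using h
  have hE := (S.inl_eq (i + 1)).symm.trans (S.inl_succ_eq i)
  grind

lemma pivot_succ_of_turns (h : S.turns i = true) : S.pivot (i + 1) = S.head i := by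
  have hE := (S.inl_eq (i + 1)).symm.trans (S.inl_succ_eq i)
  rw [tail_succ_of_turns h] at hE
  exact Sym2.congr_right.1 hE

lemma pivot_add_natCast {n : ℕ} (h : ∀ m < n, S.turns (i + m) = false) :
    S.pivot (i + n) = S.pivot i := by
  induction n with
  | zero => simp
  | succ n ih =>
    rw [Nat.cast_succ, ← add_assoc, pivot_succ (h n n.lt_succ_self)]
    exact ih fun m hm => h m (hm.trans n.lt_succ_self)

lemma tail_nextPivot [NeZero k] (hS : ∃ j, S.turns j = true) (i : ZMod k) :
    S.tail (nextPivot S.turns i) = S.pivot i := by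
  obtain ⟨n, hn, hturn, hfan⟩ := exists_nextPivot_eq hS i
  rw [hn, tail_succ_of_turns hturn, pivot_add_natCast hfan]

lemma eq_of_mem_chords [NeZero k] (hS : ∃ j, S.turns j = true) {p : ZMod k × (ZMod k ⊕ ZMod k)}
    (hp : p ∈ chords S.turns i) : E p.2 = s(S.pivot i, S.pivot p.1) := by
  have htail := tail_nextPivot hS i
  set j := nextPivot S.turns i with hj
  have hp' : p = (j, Sum.inl j) ∨ S.turns j = true ∧ p = (j + 1, Sum.inr j) := by
    simpa [chords, ← hj] using hp
  obtain rfl | ⟨hturn, rfl⟩ := hp'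
  · rw [S.inl_eq, htail]
  · rw [S.inr_eq, htail, pivot_succ_of_turns hturn]

lemma exists_eq_map_wheelEdge (h : ∀ i, S.turns i = false) :
    ∃ φ : Option (ZMod k) → V, ∀ z, E z = (wheelEdge k z).map φ := by
  have hpivot (i : ZMod k) : S.pivot i = S.pivot 0 := by
    have hper : Function.Periodic S.pivot 1 := fun i => pivot_succ (h i)
    simpa using hper.int_mul_eq i.cast
  refine ⟨fun o => o.elim (S.pivot 0) S.tail, ?_⟩
  rintro (i | i)
  · simp [wheelEdge, S.inl_eq, hpivot i, Sym2.eq_swap]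
  · simp [wheelEdge, S.inr_eq, tail_succ (h i)]

lemma exists_eq_map_squaredCycleEdge (h : ∀ i, S.turns i = true) :
    ∃ φ : ZMod k → V, ∀ z, E z = (squaredCycleEdge k z).map φ := by
  refine ⟨S.tail, ?_⟩
  rintro (i | i)
  · simp [squaredCycleEdge, S.inl_eq, tail_succ_of_turns (h i)]
  · have htail : S.tail (i + 2) = S.head i := by
      rw [← one_add_one_eq_two, ← add_assoc, tail_succ_of_turns (h _), pivot_succ_of_turns (h i)]
    simp [squaredCycleEdge, S.inr_eq, htail]

theorem turns_eq_false_or_eq_true {G : SimpleGraph V} {φ : sunGraph 7 ↪g TriLine G}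
    (S : SunStrip fun z => (φ z : Sym2 V)) :
    (∀ i, S.turns i = false) ∨ ∀ i, S.turns i = true := by
  by_contra! h
  simp only [ne_eq, Bool.not_eq_false, Bool.not_eq_true] at h
  obtain ⟨hS, hS'⟩ := h
  obtain ⟨i, hi | ⟨p, hp, q, hq, r, hr, rfl, hpq⟩⟩ := exists_short_closed_walk S.turns hS hS'
  · set j := nextPivot S.turns i with hj
    have hij : (φ (Sum.inl j) : Sym2 V) = s(S.pivot i, S.pivot j) := by
      rw [S.inl_eq, hj, tail_nextPivot hS]
    have hji : (φ (Sum.inl i) : Sym2 V) = s(S.pivot j, S.pivot i) := by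
      rw [S.inl_eq, ← tail_nextPivot hS j, hi]
    have heq : j = i :=
      Sum.inl_injective (φ.injective (Subtype.ext (hij.trans (Sym2.eq_swap.trans hji.symm))))
    exact G.not_isDiag_of_mem_edgeSet (φ (Sum.inl i)).2 (by rw [hji, heq]; rfl)
  · have hclose : G.Adj (S.pivot q.1) (S.pivot r.1) := by
      rw [← mem_edgeSet, ← eq_of_mem_chords hS hr]
      exact (φ r.2).2
    exact hpq (φ.map_adj_iff.1 (triLine_adj_of_triangle (eq_of_mem_chords hS hp)
      (eq_of_mem_chords hS hq) hclose.symm))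

end SunStrip

section Copy

variable {ι A V : Type*} {κ : ι → Sym2 A} {E : ι → Sym2 V}

/-- The edges `E` form a copy of the graph with edges `κ`, with `E z` corresponding to `κ z`. -/
def IsCopy (κ : ι → Sym2 A) (E : ι → Sym2 V) : Prop :=
  ∃ φ : A → V, Function.Injective φ ∧ ∀ z, E z = (κ z).map φ

/-- Three edges share a common endpoint. -/
def Concurrent (e₁ e₂ e₃ : Sym2 V) : Prop := ∃ x, x ∈ e₁ ∧ x ∈ e₂ ∧ x ∈ e₃

instance [Fintype V] [DecidableEq V] (e₁ e₂ e₃ : Sym2 V) : Decidable (Concurrent e₁ e₂ e₃) :=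
  inferInstanceAs (Decidable (∃ x, x ∈ e₁ ∧ x ∈ e₂ ∧ x ∈ e₃))

lemma IsCopy.concurrent_iff (h : IsCopy κ E) {z₁ z₂ z₃ : ι} :
    Concurrent (E z₁) (E z₂) (E z₃) ↔ Concurrent (κ z₁) (κ z₂) (κ z₃) := by
  obtain ⟨φ, hφ, hE⟩ := h
  simp only [Concurrent, hE, Sym2.mem_map]
  constructor
  · rintro ⟨_, ⟨a, h₁, rfl⟩, ⟨b, h₂, hb⟩, c, h₃, hc⟩
    obtain rfl := hφ hb
    obtain rfl := hφ hc
    exact ⟨_, h₁, h₂, h₃⟩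
  · rintro ⟨a, h₁, h₂, h₃⟩
    exact ⟨φ a, ⟨a, h₁, rfl⟩, ⟨a, h₂, rfl⟩, a, h₃, rfl⟩

theorem IsCopy.nonempty_iso {G : SimpleGraph V} {P : G.Subgraph} (h : IsCopy κ E)
    (hP : P.edgeSet = Set.range E) (hverts : P.verts ⊆ P.support) (hκ : ∀ a, ∃ z, a ∈ κ z) :
    Nonempty (P.coe ≃g fromEdgeSet (Set.range κ)) := by
  obtain ⟨φ, hφ, hE⟩ := h
  have hmem {a b : A} : P.Adj (φ a) (φ b) ↔ s(a, b) ∈ Set.range κ := by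
    rw [← Subgraph.mem_edgeSet, hP, Set.mem_range, Set.mem_range]
    exact exists_congr fun z => by
      rw [hE, ← Sym2.map_mk, (Sym2.map.injective hφ).eq_iff]
  have hφ_mem (a : A) : φ a ∈ P.verts := by
    obtain ⟨z, b, hz⟩ := hκ a
    exact P.edge_vert (hmem.2 ⟨z, hz⟩)
  have hφ_surj : ∀ v ∈ P.verts, ∃ a, φ a = v := by
    intro v hv
    obtain ⟨w, hvw⟩ := hverts hv
    obtain ⟨z, hz⟩ : s(v, w) ∈ Set.range E := hP ▸ hvw
    obtain ⟨a, -, ha⟩ := Sym2.mem_map.1 (hE z ▸ hz ▸ Sym2.mem_mk_left v w : v ∈ (κ z).map φ)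
    exact ⟨a, ha⟩
  have hbij : Function.Bijective fun a => (⟨φ a, hφ_mem a⟩ : P.verts) :=
    ⟨fun a b hab => hφ (congrArg Subtype.val hab),
      fun ⟨v, hv⟩ => (hφ_surj v hv).imp fun a ha => Subtype.ext ha⟩
  refine ⟨(RelIso.symm ⟨Equiv.ofBijective _ hbij, @fun a b => ?_⟩)⟩
  change P.Adj (φ a) (φ b) ↔ _
  rw [fromEdgeSet_adj, hmem]
  exact (and_iff_left_of_imp fun hab => ne_of_apply_ne φ (hmem.2 hab).ne).symm

end Copy

section Labelling

variable {V : Type*}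

lemma injective_of_eq_map_wheelEdge {k : ℕ} {E : ZMod k ⊕ ZMod k → Sym2 V}
    (hE : Function.Injective E) (hdiag : ∀ z, ¬ (E z).IsDiag) {φ : Option (ZMod k) → V}
    (h : ∀ z, E z = (wheelEdge k z).map φ) : Function.Injective φ := by
  have hhub (i : ZMod k) : φ none ≠ φ (some i) := by
    simpa [h, wheelEdge] using hdiag (Sum.inl i)
  have hrim {i j : ZMod k} (hij : φ (some i) = φ (some j)) : i = j :=
    Sum.inl_injective (hE (by simp [h, wheelEdge, hij]))
  rintro (_ | i) (_ | j) hij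
  · rfl
  · exact absurd hij (hhub j)
  · exact absurd hij.symm (hhub i)
  · rw [hrim hij]

lemma injective_of_eq_map_squaredCycleEdge {E : SunV → Sym2 V}
    (hE : Function.Injective E) (hdiag : ∀ z, ¬ (E z).IsDiag) {φ : ZMod 7 → V}
    (h : ∀ z, E z = (squaredCycleEdge 7 z).map φ) : Function.Injective φ := by
  have hne₁ (i : ZMod 7) : φ i ≠ φ (i + 1) := by
    simpa [h, squaredCycleEdge] using hdiag (Sum.inl i)
  have hne₂ (i : ZMod 7) : φ i ≠ φ (i + 2) := by
    simpa [h, squaredCycleEdge] using hdiag (Sum.inr i)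
  have hne₃ (i : ZMod 7) : φ i ≠ φ (i + 3) := by
    intro hi
    have hdup : E (Sum.inl i) = E (Sum.inr (i + 1)) := by
      rw [h, h, squaredCycleEdge, squaredCycleEdge, show i + 1 + 2 = i + 3 by ring]
      simp [hi, Sym2.eq_swap]
    exact absurd (hE hdup) Sum.inl_ne_inr
  have hdist : ∀ i j : ZMod 7, i = j ∨ j = i + 1 ∨ j = i + 2 ∨ j = i + 3 ∨
      i = j + 1 ∨ i = j + 2 ∨ i = j + 3 := by decide
  intro i j hij
  grind

theorem isCopy_wheelEdge_or_squaredCycleEdge {G : SimpleGraph V}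
    (hT : ∀ e₁ e₂, (TriLine G).Adj e₁ e₂ → ((TriLine G).commonNeighbors e₁ e₂).Subsingleton)
    (φ : sunGraph 7 ↪g TriLine G) :
    IsCopy (wheelEdge 7) (fun z => (φ z : Sym2 V)) ∨
      IsCopy (squaredCycleEdge 7) (fun z => (φ z : Sym2 V)) := by
  have : Fact (1 < 7) := ⟨by norm_num⟩
  have hinj : Function.Injective fun z => (φ z : Sym2 V) := Subtype.val_injective.comp φ.injective
  have hdiag (z : SunV) : ¬ (φ z : Sym2 V).IsDiag := G.not_isDiag_of_mem_edgeSet (φ z).2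
  obtain ⟨S⟩ := nonempty_sunStrip hT φ
  obtain hS | hS := S.turns_eq_false_or_eq_true
  · obtain ⟨x, hx⟩ := SunStrip.exists_eq_map_wheelEdge hS
    exact Or.inl ⟨x, injective_of_eq_map_wheelEdge hinj hdiag hx, hx⟩
  · obtain ⟨x, hx⟩ := SunStrip.exists_eq_map_squaredCycleEdge hS
    exact Or.inr ⟨x, injective_of_eq_map_squaredCycleEdge hinj hdiag hx, hx⟩

end Labelling

section EdgePre

variable {V W ι : Type*} {G : SimpleGraph V} {H : SimpleGraph W} (f : TriLine G ≃g H)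

lemma edgeSet_edgePre_range (g : ι → W) :
    (edgePre G f (Set.range g)).edgeSet = Set.range fun z => (f.symm (g z) : Sym2 V) := by
  ext e
  induction e with | _ a b
  constructor
  · rintro ⟨-, e, he, z, hz⟩
    exact ⟨z, by simp [hz, he]⟩
  · rintro ⟨z, hz⟩
    refine ⟨?_, f.symm (g z), hz, z, by simp⟩
    rw [← mem_edgeSet, ← hz]
    exact (f.symm (g z)).2

lemma verts_edgePre_subset_support (S : Set W) :
    (edgePre G f S).verts ⊆ (edgePre G f S).support := by
  rintro v ⟨w, e, he, hS⟩
  refine ⟨w, ?_, e, he, hS⟩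
  rw [← mem_edgeSet, ← he]
  exact e.2

end EdgePre

section Glue

variable {ι : Type*} {R : ι → ι → Prop} {τ : ι → ι}

/-- The relation `R` pairs each point moved by the involution `τ` with its image, in one of the two
orders, so that gluing along `R` amounts to taking the quotient by `τ`. -/
structure IsGluingInvolution (R : ι → ι → Prop) (τ : ι → ι) : Prop where
  involutive : Function.Involutive τ
  apply_eq {a b : ι} : R a b → τ a = b
  eq_or_rel (a : ι) : τ a = a ∨ R a (τ a) ∨ R (τ a) a

/-- Adjacency in the graph `G` glued along the involution `τ`, in terms of representatives. -/
def GlueAdj (G : SimpleGraph ι) (τ : ι → ι) (a b : ι) : Prop :=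
  a ≠ b ∧ τ a ≠ b ∧ (G.Adj a b ∨ G.Adj (τ a) b ∨ G.Adj a (τ b) ∨ G.Adj (τ a) (τ b))

instance [DecidableEq ι] (G : SimpleGraph ι) [DecidableRel G.Adj] (τ : ι → ι) :
    DecidableRel (GlueAdj G τ) :=
  fun a b => by unfold GlueAdj; infer_instance

lemma IsGluingInvolution.mk_eq_mk_iff (hτ : IsGluingInvolution R τ) {a b : ι} :
    Quotient.mk (Relation.EqvGen.setoid R) a = Quotient.mk _ b ↔ a = b ∨ τ a = b := by
  constructor
  · intro hab
    have hgen : Relation.EqvGen R a b := Quotient.exact hab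
    clear hab
    induction hgen with
    | rel _ _ h => exact Or.inr (hτ.apply_eq h)
    | refl => exact Or.inl rfl
    | symm => grind [hτ.involutive _]
    | trans => grind [hτ.involutive _]
  · rintro (rfl | rfl)
    · rfl
    · obtain h | h | h := hτ.eq_or_rel a
      · rw [h]
      · exact Quotient.sound (Relation.EqvGen.rel _ _ h)
      · exact (Quotient.sound (Relation.EqvGen.rel _ _ h)).symm

lemma IsGluingInvolution.glue_adj_mk_iff (hτ : IsGluingInvolution R τ) {G : SimpleGraph ι}
    {a b : ι} : (Glue G R).Adj (Quotient.mk _ a) (Quotient.mk _ b) ↔ GlueAdj G τ a b := by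
  have hadj : (∃ a' b', G.Adj a' b' ∧ (a = a' ∨ τ a = a') ∧ (b = b' ∨ τ b = b')) ↔
      G.Adj a b ∨ G.Adj (τ a) b ∨ G.Adj a (τ b) ∨ G.Adj (τ a) (τ b) := by
    grind
  have hadj' : (∃ b' a', G.Adj b' a' ∧ (b = b' ∨ τ b = b') ∧ (a = a' ∨ τ a = a')) ↔
      G.Adj a b ∨ G.Adj (τ a) b ∨ G.Adj a (τ b) ∨ G.Adj (τ a) (τ b) := by
    rw [← hadj, exists_comm]
    grind [G.adj_comm]
  simp only [Glue, GlueAdj, fromRel_adj, ne_eq, hτ.mk_eq_mk_iff, hadj, hadj', or_self, not_or,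
    and_assoc]

end Glue

section Gadget

/-- The involution exchanging the vertices of the two suns identified by the NOT gadget. -/
def gluePartner : Equiv.Perm (Bool × SunV) :=
  Equiv.swap (false, Sum.inl 1) (true, Sum.inl 1) *
  Equiv.swap (false, Sum.inl 0) (true, Sum.inl 0) *
  Equiv.swap (false, Sum.inr 0) (true, Sum.inr 0) *
  Equiv.swap (false, Sum.inl 2) (true, Sum.inr 1) *
  Equiv.swap (false, Sum.inr 1) (true, Sum.inl 2)

instance : DecidableRel twoSuns.Adj :=
  inferInstanceAs (DecidableRel (SimpleGraph.fromRel _).Adj)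

instance : DecidableRel notRel :=
  fun a b => by unfold notRel; infer_instance

lemma isGluingInvolution_gluePartner : IsGluingInvolution notRel gluePartner where
  involutive := by unfold Function.Involutive; decide +kernel
  apply_eq {a b} := by revert a b; decide +kernel
  eq_or_rel := by decide +kernel

lemma glueAdj_twoSuns_iff : ∀ (c : Bool) (a b : SunV),
    GlueAdj twoSuns gluePartner (c, a) (c, b) ↔ (sunGraph 7).Adj a b := by
  decide +kernel

lemma eq_of_gluePartner_eq : ∀ (c : Bool) (a b : SunV), gluePartner (c, a) = (c, b) → a = b := by
  decide +kernel

set_option synthInstance.maxSize 1000 in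
lemma glueAdj_twoSuns_commonNeighbor_unique : ∀ a b, GlueAdj twoSuns gluePartner a b →
    ∀ c, GlueAdj twoSuns gluePartner a c → GlueAdj twoSuns gluePartner b c →
    ∀ d, GlueAdj twoSuns gluePartner a d → GlueAdj twoSuns gluePartner b d →
    c = d ∨ gluePartner c = d := by
  decide +kernel

/-- The inclusion of the sun `c` into the NOT gadget. -/
def notGadgetSun (c : Bool) : sunGraph 7 ↪g notGadget where
  toFun v := Quotient.mk _ (c, v)
  inj' a b hab := by
    obtain h | h := isGluingInvolution_gluePartner.mk_eq_mk_iff.1 hab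
    · exact (Prod.ext_iff.1 h).2
    · exact eq_of_gluePartner_eq c a b h
  map_rel_iff' := isGluingInvolution_gluePartner.glue_adj_mk_iff.trans (glueAdj_twoSuns_iff _ _ _)

lemma notGadget_commonNeighbors_subsingleton {x y : Quotient (Relation.EqvGen.setoid notRel)}
    (hxy : notGadget.Adj x y) : (notGadget.commonNeighbors x y).Subsingleton := by
  rintro z ⟨hxz, hyz⟩ w ⟨hxw, hyw⟩
  induction x, y using Quotient.inductionOn₂
  induction z, w using Quotient.inductionOn₂
  simp only [mem_neighborSet, notGadget, isGluingInvolution_gluePartner.glue_adj_mk_iff] at *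
  rw [isGluingInvolution_gluePartner.mk_eq_mk_iff]
  exact glueAdj_twoSuns_commonNeighbor_unique _ _ hxy _ hxz hyz _ hxw hyw

variable {V : Type*} {G : SimpleGraph V}

lemma triLine_commonNeighbors_subsingleton (f : TriLine G ≃g notGadget)
    {e₁ e₂ : G.edgeSet} (h : (TriLine G).Adj e₁ e₂) :
    ((TriLine G).commonNeighbors e₁ e₂).Subsingleton := by
  rintro e ⟨h₁, h₂⟩ e' ⟨h₁', h₂'⟩
  exact f.injective (notGadget_commonNeighbors_subsingleton (f.map_adj_iff.2 h)
    ⟨f.map_adj_iff.2 h₁, f.map_adj_iff.2 h₂⟩ ⟨f.map_adj_iff.2 h₁', f.map_adj_iff.2 h₂'⟩)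

variable (f : TriLine G ≃g notGadget)

/-- The edges of the preimage `G` corresponding to the vertices of the sun `c`. -/
def sunEdges (c : Bool) : sunGraph 7 ↪g TriLine G :=
  (notGadgetSun c).trans f.symm.toEmbedding

theorem nonempty_edgePre_iso {c : Bool} {A : Type*} {κ : SunV → Sym2 A}
    (h : IsCopy κ fun z => (sunEdges f c z : Sym2 V)) (hκ : ∀ a, ∃ z, a ∈ κ z) :
    Nonempty ((edgePre G f (notSunVerts c)).coe ≃g fromEdgeSet (Set.range κ)) :=
  h.nonempty_iso (edgeSet_edgePre_range f _) (verts_edgePre_subset_support f _) hκ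

lemma concurrent_sunEdges_iff :
    Concurrent (sunEdges f false (Sum.inl 0) : Sym2 V) (sunEdges f false (Sum.inl 1))
        (sunEdges f false (Sum.inl 2)) ↔
      Concurrent (sunEdges f true (Sum.inl 0) : Sym2 V) (sunEdges f true (Sum.inl 1))
        (sunEdges f true (Sum.inr 1)) := by
  have hglue {a b : SunV} (h : notRel (false, a) (true, b)) :
      sunEdges f false a = sunEdges f true b :=
    congrArg f.symm (Quotient.sound (Relation.EqvGen.rel _ _ h))
  rw [hglue (a := Sum.inl 0) (b := Sum.inl 0) (by decide),
    hglue (a := Sum.inl 1) (b := Sum.inl 1) (by decide),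
    hglue (a := Sum.inl 2) (b := Sum.inr 1) (by decide)]

lemma not_isCopy_wheelEdge_both
    (h : IsCopy (wheelEdge 7) fun z => (sunEdges f false z : Sym2 V)) :
    ¬ IsCopy (wheelEdge 7) fun z => (sunEdges f true z : Sym2 V) := by
  intro h'
  have hspokes : Concurrent (wheelEdge 7 (Sum.inl 0)) (wheelEdge 7 (Sum.inl 1))
      (wheelEdge 7 (Sum.inl 2)) := by decide
  have hrim : ¬ Concurrent (wheelEdge 7 (Sum.inl 0)) (wheelEdge 7 (Sum.inl 1))
      (wheelEdge 7 (Sum.inr 1)) := by decide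
  exact hrim (h'.concurrent_iff.1 ((concurrent_sunEdges_iff f).1 (h.concurrent_iff.2 hspokes)))

lemma not_isCopy_squaredCycleEdge_both
    (h : IsCopy (squaredCycleEdge 7) fun z => (sunEdges f false z : Sym2 V)) :
    ¬ IsCopy (squaredCycleEdge 7) fun z => (sunEdges f true z : Sym2 V) := by
  intro h'
  have hpath : ¬ Concurrent (squaredCycleEdge 7 (Sum.inl 0)) (squaredCycleEdge 7 (Sum.inl 1))
      (squaredCycleEdge 7 (Sum.inl 2)) := by decide
  have hstar : Concurrent (squaredCycleEdge 7 (Sum.inl 0)) (squaredCycleEdge 7 (Sum.inl 1))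
      (squaredCycleEdge 7 (Sum.inr 1)) := by decide
  exact hpath (h.concurrent_iff.1 ((concurrent_sunEdges_iff f).2 (h'.concurrent_iff.2 hstar)))

end Gadget

theorem notGadget_preimages_general {V : Type*} (G : SimpleGraph V) (f : TriLine G ≃g notGadget) :
    (Nonempty ((edgePre G f (notSunVerts false)).coe ≃g wheelGraph 7) ∧
      Nonempty ((edgePre G f (notSunVerts true)).coe ≃g squaredCycleGraph 7)) ∨
    (Nonempty ((edgePre G f (notSunVerts false)).coe ≃g squaredCycleGraph 7) ∧
      Nonempty ((edgePre G f (notSunVerts true)).coe ≃g wheelGraph 7)) := by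
  have hcopy (c : Bool) := isCopy_wheelEdge_or_squaredCycleEdge
    (fun _ _ => triLine_commonNeighbors_subsingleton f) (sunEdges f c)
  have hwheel {c : Bool} (h : IsCopy (wheelEdge 7) fun z => (sunEdges f c z : Sym2 V)) :
      Nonempty ((edgePre G f (notSunVerts c)).coe ≃g wheelGraph 7) :=
    fromEdgeSet_range_wheelEdge 7 ▸ nonempty_edgePre_iso f h (by decide)
  have hsquare {c : Bool} (h : IsCopy (squaredCycleEdge 7) fun z => (sunEdges f c z : Sym2 V)) :
      Nonempty ((edgePre G f (notSunVerts c)).coe ≃g squaredCycleGraph 7) :=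
    fromEdgeSet_range_squaredCycleEdge 7 ▸ nonempty_edgePre_iso f h (by decide)
  obtain hfalse | hfalse := hcopy false <;> obtain htrue | htrue := hcopy true
  · exact absurd htrue (not_isCopy_wheelEdge_both f hfalse)
  · exact Or.inl ⟨hwheel hfalse, hsquare htrue⟩
  · exact Or.inr ⟨hsquare hfalse, hwheel htrue⟩
  · exact absurd htrue (not_isCopy_squaredCycleEdge_both f hfalse)

/-- If two 7-suns `S`, `S'` are joined by a NOT gadget and the resulting graph has a
triangular line graph preimage `G`, then `T⁻¹(S)` and `T⁻¹(S')` are not isomorphic: one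
is a 7-wheel and the other is a squared 7-cycle. -/
theorem notGadget_preimages {V : Type} [Fintype V] (G : SimpleGraph V)
    (f : TriLine G ≃g notGadget) :
    (Nonempty ((edgePre G f (notSunVerts false)).coe ≃g wheelGraph 7) ∧
      Nonempty ((edgePre G f (notSunVerts true)).coe ≃g squaredCycleGraph 7)) ∨
    (Nonempty ((edgePre G f (notSunVerts false)).coe ≃g squaredCycleGraph 7) ∧
      Nonempty ((edgePre G f (notSunVerts true)).coe ≃g wheelGraph 7)) :=
  notGadget_preimages_general G f
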